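/- arXiv:2509.05912 — 3 statements merged into one kernel-verified Lean document; each statement's English description precedes it below -/
import Mathlib

section
/- For all s, x, y in the octonions 𝕆, one has s·(x·(s·y)) = ((s·x)·s)·y. Equivalently, the left-multiplication operators satisfy L(s)∘L(x)∘L(s) = L((s·x)·s). -/
noncomputable section

/-- The octonions as the Cayley–Dickson double of the quaternions. -/
abbrev Oct : Type := Quaternion ℝ × Quaternion ℝ

namespace Oct

/-- Cayley–Dickson multiplication: (a,b)·(c,d) = (ac − d̄b, da + bc̄). -/
def mul (x y : Oct) : Oct :=
  (x.1 * y.1 - star y.2 * x.2, y.2 * x.1 + x.2 * star y.1)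

/-- The unit 1 = (1,0). -/
def one : Oct := (1, 0)

/-- Octonionic conjugation κ(a,b) = (ā, −b). -/
def conj (x : Oct) : Oct := (star x.1, -x.2)

/-- The squared Euclidean norm ‖(a,b)‖² = ‖a‖² + ‖b‖². -/
def normSq (x : Oct) : ℝ := ‖x.1‖ ^ 2 + ‖x.2‖ ^ 2

/-- Left multiplication L(s) : y ↦ s·y. -/
def L (s : Oct) : Oct → Oct := fun y => mul s y

/-- A linear automorphism of 𝕆 is an isometry if it preserves the Euclidean norm. -/
def IsIsometry (A : Oct ≃ₗ[ℝ] Oct) : Prop := ∀ x, normSq (A x) = normSq x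

/-- A triality triple: ℝ-linear isometric bijections with B(x·y) = (Cx)·(Ay). -/
def IsTriality (A B C : Oct ≃ₗ[ℝ] Oct) : Prop :=
  IsIsometry A ∧ IsIsometry B ∧ IsIsometry C ∧
    ∀ x y : Oct, B (mul x y) = mul (C x) (A y)

/-- Octonionic conjugation κ as an ℝ-linear equivalence. -/
def kappa : Oct ≃ₗ[ℝ] Oct where
  toFun := conj
  invFun := conj
  left_inv := fun x => by simp [conj]
  right_inv := fun x => by simp [conj]
  map_add' := fun x y => by simp [conj, Prod.ext_iff, star_add, neg_add, add_comm]
  map_smul' := fun r x => by simp [conj, Prod.ext_iff]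

/-- D ↦ κ∘D∘κ. -/
def conjOp (D : Oct ≃ₗ[ℝ] Oct) : Oct ≃ₗ[ℝ] Oct := kappa.trans (D.trans kappa)

/-- Triples of ℝ-linear bijections of 𝕆. -/
abbrev Triple := (Oct ≃ₗ[ℝ] Oct) × (Oct ≃ₗ[ℝ] Oct) × (Oct ≃ₗ[ℝ] Oct)

/-- The triality map τ(A,B,C) = (κBκ, κCκ, A). -/
def tauMap (T : Triple) : Triple := (conjOp T.2.1, conjOp T.2.2, T.1)

/-- The outer involution σ(A,B,C) = (B, A, κCκ). -/
def sigmaMap (T : Triple) : Triple := (T.2.1, T.1, conjOp T.2.2)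

/-- The induced map on S⁷ × S⁷: t(x,y) = (ȳ, x·ȳ). -/
def tS (p : Oct × Oct) : Oct × Oct := (conj p.2, mul p.1 (conj p.2))

/-- The swap s(x,y) = (y,x). -/
def swap (p : Oct × Oct) : Oct × Oct := (p.2, p.1)

end Oct

open Oct

/-!
The argument separates two facts. In a ring whose associator is alternating, the Moufang identity
follows from polarised forms of the alternative laws, with no division by `2`. And the
Cayley–Dickson double of an associative star ring with central norms `star a * a` is such a ring:
central norms force central traces `star a + a`, these two facts give the left alternative law, and
conjugation turns it into the right one.
-/

section Alternative

/-- An alternative ring: a not necessarily associative ring satisfying the left and right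
alternative laws, expressed as the vanishing of the associator on `(x, x, y)` and `(x, y, y)`. -/
class IsAlternative (R : Type*) [NonUnitalNonAssocRing R] : Prop where
  associator_self_left (x y : R) : associator x x y = 0
  associator_self_right (x y : R) : associator x y y = 0

variable {R : Type*} [NonUnitalNonAssocRing R]

namespace IsAlternative

variable [IsAlternative R]

theorem associator_swap_left (x y z : R) : associator x y z = -associator y x z := by
  have polarised := associator_self_left (x + y) z
  rw [← AddMonoidHom.associator_apply] at polarised
  simp only [map_add, AddMonoidHom.add_apply, AddMonoidHom.associator_apply,
    associator_self_left, zero_add, add_zero] at polarised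
  exact eq_neg_of_add_eq_zero_right polarised

theorem associator_swap_right (x y z : R) : associator x y z = -associator x z y := by
  have polarised := associator_self_right x (y + z)
  rw [← AddMonoidHom.associator_apply] at polarised
  simp only [map_add, AddMonoidHom.add_apply, AddMonoidHom.associator_apply,
    associator_self_right, zero_add, add_zero] at polarised
  exact eq_neg_of_add_eq_zero_right polarised

theorem mul_self_mul (x y : R) : x * x * y = x * (x * y) :=
  sub_eq_zero.mp (associator_self_left x y)

theorem left_moufang (s x y : R) : s * (x * (s * y)) = s * x * s * y := by
  have associator_sum : associator (s * x) s y + associator s x (s * y) = 0 := calc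
    _ = -associator s (s * x) y - associator s (s * y) x := by
      rw [associator_swap_left (s * x), associator_swap_right s x, sub_eq_add_neg]
    _ = s * (associator s x y + associator s y x) -
          (associator (s * s) x y + associator (s * s) y x) := by
      simp only [associator_apply, mul_self_mul, mul_add, mul_sub]
      abel
    _ = 0 := by
      rw [associator_swap_right s x, associator_swap_right (s * s) x]
      simp only [neg_add_cancel, mul_zero, sub_zero]
  rw [associator_apply, associator_apply, sub_add_sub_cancel] at associator_sum
  exact (sub_eq_zero.mp associator_sum).symm

end IsAlternative

theorem associator_star [StarRing R] (x y z : R) :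
    associator (star x) (star y) (star z) = -star (associator z y x) := by
  simp only [associator_apply, star_sub, star_mul, neg_sub]

theorem isAlternative_of_associator_self_left [StarRing R]
    (h : ∀ x y : R, associator x x y = 0) : IsAlternative R where
  associator_self_left := h
  associator_self_right x y := by
    simpa only [star_star, h, star_zero, neg_zero] using
      associator_star (star x) (star y) (star y)

end Alternative

section CentralNorm

/-- A star ring all of whose norms `star a * a` are central. This is the condition under which
Cayley–Dickson doubling yields an alternative ring. -/
class HasCentralNorm (A : Type*) [Ring A] [StarRing A] : Prop where
  star_mul_self_mem_center (a : A) : star a * a ∈ Subring.center A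

namespace HasCentralNorm

variable {A : Type*} [Ring A] [StarRing A] [HasCentralNorm A]

theorem star_add_self_mem_center (a : A) : star a + a ∈ Subring.center A := by
  have norm_add_one : star a + a = star (a + 1) * (a + 1) - star a * a - 1 := by
    rw [star_add, star_one]
    noncomm_ring
  rw [norm_add_one]
  exact sub_mem (sub_mem (star_mul_self_mem_center _) (star_mul_self_mem_center _)) (one_mem _)

instance isStarNormal (a : A) : IsStarNormal a where
  star_comm_self := by
    have trace_comm := Subring.mem_center_iff.mp (star_add_self_mem_center a) a
    rw [mul_add, add_mul, add_left_inj] at trace_comm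
    exact trace_comm.symm

end HasCentralNorm

instance {R : Type*} [CommRing R] : HasCentralNorm (Quaternion R) where
  star_mul_self_mem_center a := Subring.mem_center_iff.mpr fun b => by
    rw [Quaternion.star_mul_self]
    exact (Quaternion.coe_commutes _ b).symm

end CentralNorm

/-- The Cayley–Dickson double of `A`. It is a structure rather than `A × A`, which already carries
the componentwise multiplication; for the real quaternions the doubled one is `Oct.mul`. -/
@[ext]
structure CayleyDickson (A : Type*) where
  fst : A
  snd : A

namespace CayleyDickson

/-- The underlying pair of an element of the double. The additive structure of the double is
transported along it, and it identifies the double of the real quaternions with `Oct`. -/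
def equivProd (A : Type*) : CayleyDickson A ≃ A × A where
  toFun x := (x.fst, x.snd)
  invFun p := ⟨p.1, p.2⟩

section AddCommGroup

variable {A : Type*} [AddCommGroup A]

instance : AddCommGroup (CayleyDickson A) := (equivProd A).addCommGroup

@[simp]
theorem fst_zero : (0 : CayleyDickson A).fst = 0 := rfl

@[simp]
theorem snd_zero : (0 : CayleyDickson A).snd = 0 := rfl

@[simp]
theorem fst_add (x y : CayleyDickson A) : (x + y).fst = x.fst + y.fst := rfl

@[simp]
theorem snd_add (x y : CayleyDickson A) : (x + y).snd = x.snd + y.snd := rfl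

end AddCommGroup

section NonUnitalNonAssocRing

variable {A : Type*} [NonUnitalNonAssocRing A] [StarRing A]

instance : Mul (CayleyDickson A) where
  mul x y := ⟨x.fst * y.fst - star y.snd * x.snd, y.snd * x.fst + x.snd * star y.fst⟩

instance : Star (CayleyDickson A) where
  star x := ⟨star x.fst, -x.snd⟩

@[simp]
theorem fst_mul (x y : CayleyDickson A) :
    (x * y).fst = x.fst * y.fst - star y.snd * x.snd := rfl

@[simp]
theorem snd_mul (x y : CayleyDickson A) :
    (x * y).snd = y.snd * x.fst + x.snd * star y.fst := rfl

@[simp]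
theorem fst_star (x : CayleyDickson A) : (star x).fst = star x.fst := rfl

@[simp]
theorem snd_star (x : CayleyDickson A) : (star x).snd = -x.snd := rfl

instance : NonUnitalNonAssocRing (CayleyDickson A) where
  left_distrib x y z := by
    ext <;> simp only [fst_add, snd_add, fst_mul, snd_mul, star_add, mul_add, add_mul] <;> abel
  right_distrib x y z := by
    ext <;> simp only [fst_add, snd_add, fst_mul, snd_mul, mul_add, add_mul] <;> abel
  zero_mul x := by ext <;> simp
  mul_zero x := by ext <;> simp

instance : StarRing (CayleyDickson A) where
  star_involutive x := by ext <;> simp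
  star_mul x y := by ext <;> simp [add_comm]
  star_add x y := by ext <;> simp [add_comm]

end NonUnitalNonAssocRing

section HasCentralNorm

variable {A : Type*} [Ring A] [StarRing A] [HasCentralNorm A]

theorem mul_self_mul (x y : CayleyDickson A) : x * x * y = x * (x * y) := by
  obtain ⟨a, b⟩ := x
  obtain ⟨c, d⟩ := y
  have trace_comm (z : A) : z * (star a + a) = (star a + a) * z :=
    Subring.mem_center_iff.mp (HasCentralNorm.star_add_self_mem_center a) z
  have norm_comm (z : A) : z * (star b * b) = star b * b * z :=
    Subring.mem_center_iff.mp (HasCentralNorm.star_mul_self_mem_center b) z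
  ext
  · simp only [fst_mul, snd_mul, star_add, star_mul, star_star]
    calc (a * a - star b * b) * c - star d * (b * a + b * star a)
        = a * a * c - star b * b * c - star d * b * (star a + a) := by noncomm_ring
      _ = a * a * c - c * (star b * b) - (star a + a) * (star d * b) := by
        rw [trace_comm, norm_comm]
      _ = a * (a * c - star d * b) - (star a * star d + c * star b) * b := by noncomm_ring
  · simp only [fst_mul, snd_mul, star_sub, star_mul, star_star]
    calc d * (a * a - star b * b) + (b * a + b * star a) * star c
        = d * a * a - d * (star b * b) + b * ((star a + a) * star c) := by noncomm_ring
      _ = d * a * a - b * star b * d + b * (star c * (star a + a)) := by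
        rw [trace_comm, norm_comm, star_comm_self']
      _ = (d * a + b * star c) * a + b * (star c * star a - star b * d) := by noncomm_ring

instance : IsAlternative (CayleyDickson A) :=
  isAlternative_of_associator_self_left fun x y => sub_eq_zero.mpr (mul_self_mul x y)

end HasCentralNorm

end CayleyDickson

theorem octonion_L_s_L_x_L_s_general {A : Type*} [Ring A] [StarRing A] [HasCentralNorm A]
    (s x y : CayleyDickson A) : s * (x * (s * y)) = s * x * s * y :=
  IsAlternative.left_moufang s x y

/-- L(s)∘L(x)∘L(s) = L((s·x)·s) on the octonions. -/
theorem octonion_L_s_L_x_L_s (s x y : Oct) :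
    mul s (mul x (mul s y)) = mul (mul (mul s x) s) y :=
  congrArg (CayleyDickson.equivProd (Quaternion ℝ)) <|
    octonion_L_s_L_x_L_s_general ⟨s.1, s.2⟩ ⟨x.1, x.2⟩ ⟨y.1, y.2⟩
end
end

section
/- The triality map τ, defined on triples of ℝ-linear isometric bijections of 𝕆 by τ(A,B,C) = (κ∘B∘κ, κ∘C∘κ, A), sends triality triples to triality triples, and has order 3: τ(τ(τ(A,B,C))) = (A,B,C) for every triple (A,B,C). -/
noncomputable section

open Oct

/-!
Since `(u x) x̄ = ‖x‖² u`, right multiplication by `x` is undone, up to a scalar, by right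
multiplication by `x̄`. Applied to `B (x y) = (C x) (A y)` with `A` isometric, this gives
`C (x ȳ) = (B x) κ(A y)`. As `κ` reverses products, conjugating this identity yields the triality
relation for `(κBκ, κCκ, A)`. The order of `τ` is 3 because each entry, carried once around the
triple, meets conjugation by `κ` twice.
-/

namespace Oct

@[simp]
theorem conj_conj (x : Oct) : conj (conj x) = x := kappa.left_inv x

@[simp]
theorem conj_zero : conj 0 = 0 := kappa.map_zero

theorem conj_mul (x y : Oct) : conj (mul x y) = mul (conj y) (conj x) := by
  ext1 <;> simp only [conj, mul, star_sub, star_mul, star_star, star_neg] <;> noncomm_ring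

@[simp]
theorem mul_zero (x : Oct) : mul x 0 = 0 := by simp [mul]

theorem smul_mul (r : ℝ) (x y : Oct) : mul (r • x) y = r • mul x y := by
  simp [mul, smul_sub]

@[simp]
theorem normSq_conj (x : Oct) : normSq (conj x) = normSq x := by simp [normSq, conj]

theorem normSq_eq_zero {x : Oct} : normSq x = 0 ↔ x = 0 := by
  rw [normSq, add_eq_zero_iff_of_nonneg (sq_nonneg _) (sq_nonneg _)]
  simp [Prod.ext_iff]

theorem normSq_eq_add_quaternion_normSq (x : Oct) :
    normSq x = Quaternion.normSq x.1 + Quaternion.normSq x.2 := by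
  simp only [normSq, Quaternion.normSq_eq_norm_mul_self, sq]

theorem mul_mul_conj (x y : Oct) : mul (mul x y) (conj y) = normSq y • x := by
  obtain ⟨a, b⟩ := x
  obtain ⟨c, d⟩ := y
  rw [normSq_eq_add_quaternion_normSq]
  ext1
  · calc (a * c - star d * b) * star c - star (-d) * (d * a + b * star c)
        = a * (c * star c) + star d * d * a := by rw [star_neg]; noncomm_ring
      _ = (Quaternion.normSq c + Quaternion.normSq d) • a := by
        rw [Quaternion.self_mul_star, Quaternion.star_mul_self, Quaternion.mul_coe_eq_smul,
          Quaternion.coe_mul_eq_smul, add_smul]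
  · calc -d * (a * c - star d * b) + (d * a + b * star c) * star (star c)
        = b * (star c * c) + d * star d * b := by rw [star_star]; noncomm_ring
      _ = (Quaternion.normSq c + Quaternion.normSq d) • b := by
        rw [Quaternion.self_mul_star, Quaternion.star_mul_self, Quaternion.mul_coe_eq_smul,
          Quaternion.coe_mul_eq_smul, add_smul]

theorem mul_conj_mul (x y : Oct) : mul (mul x (conj y)) y = normSq y • x := by
  simpa using mul_mul_conj x (conj y)

theorem map_mul_conj_of_map_mul {A B C : Oct →ₗ[ℝ] Oct} (hA : ∀ x, normSq (A x) = normSq x)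
    (hmul : ∀ x y, B (mul x y) = mul (C x) (A y)) (x y : Oct) :
    C (mul x (conj y)) = mul (B x) (conj (A y)) := by
  obtain rfl | hy := eq_or_ne y 0
  · simp
  · refine smul_right_injective Oct (normSq_eq_zero.not.mpr hy) ?_
    calc normSq y • C (mul x (conj y))
        = mul (mul (C (mul x (conj y))) (A y)) (conj (A y)) := by rw [mul_mul_conj, hA]
      _ = mul (B (mul (mul x (conj y)) y)) (conj (A y)) := by rw [hmul]
      _ = normSq y • mul (B x) (conj (A y)) := by rw [mul_conj_mul, map_smul, smul_mul]

theorem conjOp_apply (D : Oct ≃ₗ[ℝ] Oct) (x : Oct) : conjOp D x = conj (D (conj x)) := rfl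

theorem conjOp_conjOp (D : Oct ≃ₗ[ℝ] Oct) : conjOp (conjOp D) = D := by
  ext1 x
  simp only [conjOp_apply, conj_conj]

theorem IsIsometry.conjOp {D : Oct ≃ₗ[ℝ] Oct} (hD : IsIsometry D) : IsIsometry (conjOp D) := by
  intro x
  rw [conjOp_apply, normSq_conj, hD, normSq_conj]

theorem IsTriality.tau {A B C : Oct ≃ₗ[ℝ] Oct} (h : IsTriality A B C) :
    IsTriality (Oct.conjOp B) (Oct.conjOp C) A := by
  obtain ⟨hA, hB, hC, hmul⟩ := h
  refine ⟨hB.conjOp, hC.conjOp, hA, fun x y => ?_⟩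
  have hCB : C (mul (conj y) (conj x)) = mul (B (conj y)) (conj (A x)) :=
    map_mul_conj_of_map_mul (A := A) (B := B) (C := C) hA hmul (conj y) x
  calc Oct.conjOp C (mul x y)
      = conj (C (mul (conj y) (conj x))) := by rw [conjOp_apply, conj_mul]
    _ = mul (A x) (Oct.conjOp B y) := by rw [hCB, conj_mul, conj_conj, conjOp_apply]

theorem tauMap_tauMap_tauMap (T : Triple) : tauMap (tauMap (tauMap T)) = T := by
  simp only [tauMap, conjOp_conjOp]

end Oct

/-- the triality map τ(A,B,C) = (κBκ, κCκ, A) sends triality triples to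
triality triples and has order 3 on all triples. -/
theorem tau_triality_and_order_three :
    (∀ A B C : Oct ≃ₗ[ℝ] Oct, IsTriality A B C →
      IsTriality (tauMap (A, B, C)).1 (tauMap (A, B, C)).2.1 (tauMap (A, B, C)).2.2)
    ∧ (∀ T : Triple, tauMap (tauMap (tauMap T)) = T) :=
  ⟨fun _ _ _ h => h.tau, tauMap_tauMap_tauMap⟩
end
end

section
/- If (A,B,C) is a triality triple with A(1) = 1 and B(1) = 1, then A = B = C and A is an algebra automorphism of 𝕆: A(x·y) = A(x)·A(y) for all x, y ∈ 𝕆. (This identifies the isotropy group at (1,1) of the action of Spin₈ on S⁷ × S⁷ with G₂ = Aut(𝕆).) -/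
noncomputable section

open Oct

/-- A homotopism of magmas: maps `f`, `g`, `h` with `h (x * y) = f x * g y`. A triality triple
`(A, B, C)` is one with `(f, g, h) = (C, A, B)`. The operations are explicit arguments because
`Oct`, being a product type, already carries the componentwise multiplication. -/
def IsHomotopism {M N : Type*} (opM : M → M → M) (opN : N → N → N) (f g h : M → N) : Prop :=
  ∀ x y, h (opM x y) = opN (f x) (g y)

namespace IsHomotopism

variable {M N : Type*} {opM : M → M → M} {opN : N → N → N} {eM : M} {eN : N} {f g h : M → N}

theorem eq_left [Std.LawfulRightIdentity opM eM] [Std.LawfulRightIdentity opN eN]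
    (H : IsHomotopism opM opN f g h) (hg : g eM = eN) : h = f := by
  funext x
  calc
    h x = h (opM x eM) := by rw [Std.LawfulRightIdentity.right_id (op := opM)]
    _ = opN (f x) eN := by rw [H, hg]
    _ = f x := Std.LawfulRightIdentity.right_id _

theorem eq_right [Std.LawfulLeftIdentity opM eM] [Std.LawfulLeftIdentity opN eN]
    (H : IsHomotopism opM opN f g h) (hf : f eM = eN) : h = g := by
  funext y
  calc
    h y = h (opM eM y) := by rw [Std.LawfulLeftIdentity.left_id (op := opM)]
    _ = opN eN (g y) := by rw [H, hf]
    _ = g y := Std.LawfulLeftIdentity.left_id _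

end IsHomotopism

theorem isotropy_is_G2_general {M N : Type*} {opM : M → M → M} {opN : N → N → N} {eM : M} {eN : N}
    [Std.LawfulIdentity opM eM] [Std.LawfulIdentity opN eN] {A B C : M → N}
    (H : IsHomotopism opM opN C A B) (hA : A eM = eN) (hB : B eM = eN) :
    B = A ∧ C = A ∧ ∀ x y, A (opM x y) = opN (A x) (A y) := by
  obtain rfl : B = C := H.eq_left hA
  obtain rfl : B = A := H.eq_right hB
  exact ⟨rfl, rfl, H⟩

namespace Oct

instance : Std.LawfulIdentity mul one where
  left_id x := by simp [mul, one]
  right_id x := by simp [mul, one]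

theorem IsTriality.isHomotopism {A B C : Oct ≃ₗ[ℝ] Oct} (h : IsTriality A B C) :
    IsHomotopism mul mul C A B :=
  h.2.2.2

end Oct

/-- a triality triple with A(1) = B(1) = 1 has A = B = C and A an algebra
automorphism of 𝕆 (isotropy group of Spin₈ at (1,1) is G₂ = Aut(𝕆)). -/
theorem isotropy_is_G2 (A B C : Oct ≃ₗ[ℝ] Oct) (h : IsTriality A B C)
    (hA : A one = one) (hB : B one = one) :
    B = A ∧ C = A ∧ ∀ x y : Oct, A (mul x y) = mul (A x) (A y) := by
  obtain ⟨hBA, hCA, hmul⟩ := isotropy_is_G2_general h.isHomotopism hA hB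
  exact ⟨DFunLike.coe_injective hBA, DFunLike.coe_injective hCA, hmul⟩
end
end
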